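/- Assume the dataset D has ℓ¹ diameter at most 1. Then for every z ∈ ℝ^d, the mixup-plus-noise output densities satisfy p(z) ≤ (1 − k/n + exp(1/(kσ)) · k/n) · q(z). -/

import Mathlib

open Finset

/-- The d-dimensional isotropic Laplacian density with scale σ. -/
noncomputable def laplacianDensity (d : ℕ) (σ : ℝ) (η : Fin d → ℝ) : ℝ :=
  ((2 * σ) ^ d)⁻¹ * Real.exp (-(∑ i, |η i|) / σ)

/-- The mixup-plus-noise output density of a finite dataset `P`. -/
noncomputable def mixupDensity (d : ℕ) (σ : ℝ) (k : ℕ) (P : Finset (Fin d → ℝ))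
    (z : Fin d → ℝ) : ℝ :=
  ((P.card.choose k : ℝ))⁻¹ *
    ∑ S ∈ P.powersetCard k, laplacianDensity d σ (z - (k : ℝ)⁻¹ • ∑ x ∈ S, x)


lemma mixup_double_count {α : Type*} [DecidableEq α] (E : Finset α) (j : ℕ) (F : Finset α → ℝ) :
    ∑ T ∈ E.powersetCard j, ∑ y ∈ E \ T, F (insert y T)
      = (j + 1 : ℝ) * ∑ S ∈ E.powersetCard (j + 1), F S := by
  have h : (j + 1 : ℝ) * ∑ S ∈ E.powersetCard (j + 1), F S
      = ∑ S ∈ E.powersetCard (j + 1), ∑ _y ∈ S, F S := by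
    rw [mul_sum]
    refine sum_congr rfl fun S hS => ?_
    rw [sum_const, (mem_powersetCard.1 hS).2, nsmul_eq_mul]
    push_cast
    ring
  rw [h, sum_sigma', sum_sigma']
  refine sum_bij' (fun p _ => ⟨insert p.2 p.1, p.2⟩) (fun p _ => ⟨p.1.erase p.2, p.2⟩) ?_ ?_ ?_ ?_ ?_
  · rintro ⟨T, y⟩ hp
    simp only [mem_sigma, mem_powersetCard, mem_sdiff] at hp ⊢
    obtain ⟨⟨h1, h2⟩, h3, h4⟩ := hp
    exact ⟨⟨insert_subset h3 h1, by rw [card_insert_of_notMem h4, h2]⟩, mem_insert_self _ _⟩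
  · rintro ⟨S, y⟩ hp
    simp only [mem_sigma, mem_powersetCard, mem_sdiff] at hp ⊢
    obtain ⟨⟨h1, h2⟩, h3⟩ := hp
    exact ⟨⟨(erase_subset _ _).trans h1, by rw [card_erase_of_mem h3, h2]; rfl⟩, h1 h3,
      notMem_erase _ _⟩
  · rintro ⟨T, y⟩ hp
    simp only [mem_sigma, mem_powersetCard, mem_sdiff] at hp
    simp [erase_insert hp.2.2]
  · rintro ⟨S, y⟩ hp
    simp only [mem_sigma] at hp
    simp [insert_erase hp.2]
  · rintro ⟨T, y⟩ hp
    rfl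

lemma laplacian_ratio (d : ℕ) (σ : ℝ) (hσ : 0 < σ) (k : ℕ) (hk : 1 ≤ k)
    (x y s z : Fin d → ℝ) (h : ∑ i, |x i - y i| ≤ 1) :
    laplacianDensity d σ (z - (k : ℝ)⁻¹ • (x + s))
      ≤ Real.exp (1 / (k * σ)) * laplacianDensity d σ (z - (k : ℝ)⁻¹ • (y + s)) := by
  unfold laplacianDensity
  have hk0 : (0 : ℝ) < k := by exact_mod_cast hk
  have key : ∑ i, |(z - (k : ℝ)⁻¹ • (y + s)) i|
      ≤ ∑ i, |(z - (k : ℝ)⁻¹ • (x + s)) i| + (k : ℝ)⁻¹ := by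
    calc _ ≤ ∑ i, (|(z - (k : ℝ)⁻¹ • (x + s)) i| + (k : ℝ)⁻¹ * |x i - y i|) := by
          refine Finset.sum_le_sum fun i _ => ?_
          have : (z - (k : ℝ)⁻¹ • (y + s)) i
              = (z - (k : ℝ)⁻¹ • (x + s)) i + (k : ℝ)⁻¹ * (x i - y i) := by
            simp only [Pi.sub_apply, Pi.smul_apply, Pi.add_apply, smul_eq_mul]
            ring
          rw [this]
          refine (abs_add_le _ _).trans ?_
          rw [abs_mul, abs_of_pos (inv_pos.2 hk0)]
      _ ≤ _ := by
          rw [Finset.sum_add_distrib, ← Finset.mul_sum]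
          have := mul_le_mul_of_nonneg_left h (inv_pos.2 hk0).le
          linarith
  rw [mul_left_comm, ← Real.exp_add]
  refine mul_le_mul_of_nonneg_left (Real.exp_le_exp.2 ?_) (by positivity)
  have e : 1 / (k * σ) = (k : ℝ)⁻¹ / σ := by field_simp
  rw [e, ← add_div]
  exact div_le_div_of_nonneg_right (by linarith) hσ.le

/-- If `D` has ℓ¹ diameter at most 1, then
`p(z) ≤ (1 − k/n + exp(1/(kσ))·k/n)·q(z)` for every `z ∈ ℝ^d`. -/
theorem mixup_density_upper_ratio_bound
    (d : ℕ) (hd : 1 ≤ d) (σ : ℝ) (hσ : 0 < σ)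
    (D : Finset (Fin d → ℝ)) (n : ℕ) (hn : D.card = n)
    (hdiam : ∀ x ∈ D, ∀ y ∈ D, ∑ i, |x i - y i| ≤ 1)
    (x₀ : Fin d → ℝ) (hx₀ : x₀ ∈ D)
    (k : ℕ) (hk1 : 1 ≤ k) (hkn : k ≤ n - 1)
    (z : Fin d → ℝ) :
    mixupDensity d σ k D z
      ≤ (1 - (k : ℝ) / n + Real.exp (1 / (k * σ)) * ((k : ℝ) / n)) *
          mixupDensity d σ k (D.erase x₀) z := by
  obtain ⟨j, rfl⟩ : ∃ j, k = j + 1 := ⟨k - 1, by omega⟩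
  obtain ⟨r, rfl⟩ : ∃ r, n = j + 1 + (r + 1) := ⟨n - (j + 2), by omega⟩
  set E := D.erase x₀ with hE
  have hxE : x₀ ∉ E := notMem_erase _ _
  have hDE : D = insert x₀ E := (insert_erase hx₀).symm
  have hEc : E.card = j + 1 + r := by
    rw [hE, card_erase_of_mem hx₀, hn]; rfl
  set F : Finset (Fin d → ℝ) → ℝ := fun S =>
    laplacianDensity d σ (z - ((j + 1 : ℕ) : ℝ)⁻¹ • ∑ x ∈ S, x) with hF
  set e := Real.exp (1 / (((j + 1 : ℕ) : ℝ) * σ)) with he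
  have hsplit : ∑ S ∈ D.powersetCard (j + 1), F S
      = ∑ S ∈ E.powersetCard (j + 1), F S + ∑ T ∈ E.powersetCard j, F (insert x₀ T) := by
    rw [hDE, powersetCard_succ_insert hxE, sum_union, sum_image]
    · intro S hS T hT hST
      have h1 : x₀ ∉ S := fun h => hxE ((mem_powersetCard.1 hS).1 h)
      have h2 : x₀ ∉ T := fun h => hxE ((mem_powersetCard.1 hT).1 h)
      rw [← erase_insert h1, ← erase_insert h2]
      exact congrArg (fun U => U.erase x₀) hST
    · rw [disjoint_left]
      intro S hS hS'
      obtain ⟨T, -, rfl⟩ := mem_image.1 hS'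
      exact hxE ((mem_powersetCard.1 hS).1 (mem_insert_self _ _))
  have hA : (r + 1 : ℝ) * ∑ T ∈ E.powersetCard j, F (insert x₀ T)
      ≤ e * ((j + 1 : ℝ) * ∑ S ∈ E.powersetCard (j + 1), F S) := by
    rw [← mixup_double_count, mul_sum, mul_sum]
    refine sum_le_sum fun T hT => ?_
    obtain ⟨hTE, hTc⟩ := mem_powersetCard.1 hT
    have hc : (E \ T).card = r + 1 := by
      rw [card_sdiff_of_subset hTE, hEc, hTc]; omega
    have : (r + 1 : ℝ) * F (insert x₀ T) = ∑ _y ∈ E \ T, F (insert x₀ T) := by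
      rw [sum_const, hc, nsmul_eq_mul]; push_cast; ring
    rw [this, mul_sum]
    refine sum_le_sum fun y hy => ?_
    obtain ⟨hyE, hyT⟩ := mem_sdiff.1 hy
    simp only [hF]
    rw [sum_insert (fun h => hxE (hTE h)), sum_insert hyT]
    exact laplacian_ratio d σ hσ (j + 1) hk1 _ _ _ _ (hdiam _ hx₀ _ (mem_of_mem_erase hyE))
  unfold mixupDensity
  change _ * ∑ S ∈ D.powersetCard (j + 1), F S ≤ _ * (_ * ∑ S ∈ E.powersetCard (j + 1), F S)
  rw [hsplit, hn, hEc]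
  generalize (∑ S ∈ E.powersetCard (j + 1), F S) = B at *
  generalize (∑ T ∈ E.powersetCard j, F (insert x₀ T)) = A at *
  have hch : ((j + 1 + (r + 1)).choose (j + 1) : ℝ) * (r + 1)
      = ((j + 1 + r).choose (j + 1) : ℝ) * (j + 1 + (r + 1)) := by
    have := Nat.choose_mul_succ_eq (j + 1 + r) (j + 1)
    have h2 : j + 1 + r + 1 - (j + 1) = r + 1 := by omega
    rw [h2] at this
    exact_mod_cast this.symm
  have hc1 : (0 : ℝ) < ((j + 1 + (r + 1)).choose (j + 1) : ℝ) := by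
    exact_mod_cast Nat.choose_pos (by omega)
  have hc2 : (0 : ℝ) < ((j + 1 + r).choose (j + 1) : ℝ) := by
    exact_mod_cast Nat.choose_pos (by omega)
  generalize ((j + 1 + (r + 1)).choose (j + 1) : ℝ) = c1 at *
  generalize ((j + 1 + r).choose (j + 1) : ℝ) = c2 at *
  push_cast
  have hN : (0 : ℝ) < (j : ℝ) + 1 + (r + 1) := by positivity
  have hr : (0 : ℝ) < (r : ℝ) + 1 := by positivity
  have hc1' : c1 = c2 * (j + 1 + (r + 1)) / (r + 1) := by
    rw [eq_div_iff hr.ne', hch]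
  have hR : (1 - ((j : ℝ) + 1) / (j + 1 + (r + 1)) + e * (((j : ℝ) + 1) / (j + 1 + (r + 1))))
      * (c2⁻¹ * B) = (c2 * (j + 1 + (r + 1)))⁻¹ * ((r + 1) * B + e * ((j + 1) * B)) := by
    field_simp
    ring
  have hL : c1⁻¹ * (B + A) = (c2 * (j + 1 + (r + 1)))⁻¹ * ((r + 1) * B + (r + 1) * A) := by
    rw [hc1']
    field_simp
  rw [hR, hL]
  exact mul_le_mul_of_nonneg_left (by linarith) (by positivity)
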